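/- Let L ∈ (0,π), set δ² = (π² − L²)/(4L²), and let k > 0 satisfy k² < min(3/5, 4δ²/9); set χ = k(δ² + k⁴) and a = (3 − 5k²)/2. Let T > 0, D = (0,∞) × (0,L), and let u : [0,T] × ℝ² → ℝ be smooth, satisfy u_t + u_x + u u_x + u_{xxx} + u_{xyy} − u_{xxxxx} = 0 on [0,T] × D with boundary conditions u(t,0,y) = u_x(t,0,y) = 0 and u(t,x,0) = u(t,x,L) = 0, and suppose that e^{kx/2} times u and e^{kx/2} times each of its spatial partial derivatives up to order five is square-integrable over D uniformly in t and that these weighted quantities tend to 0 as x → ∞ uniformly. If the initial datum u₀ = u(0,·,·) satisfies ∫_D u₀² dxdy ≤ (9δ²/2) · min(1/8, a/2, δ²/4), then for all t ∈ [0,T], ∫_D u(t,x,y)² dxdy ≤ ∫_D e^{kx} u(t,x,y)² dxdy ≤ e^{−χ t} ∫_D e^{kx} u₀(x,y)² dxdy. -/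

import Mathlib

open MeasureTheory Real

/-- Partial derivative with respect to the first spatial coordinate. -/
noncomputable def pdx (u : ℝ × ℝ → ℝ) : ℝ × ℝ → ℝ :=
  fun p => deriv (fun x => u (x, p.2)) p.1

/-- Partial derivative with respect to the second spatial coordinate. -/
noncomputable def pdy (u : ℝ × ℝ → ℝ) : ℝ × ℝ → ℝ :=
  fun p => deriv (fun y => u (p.1, y)) p.2

/-- Mixed spatial partial derivative `∂_x^i ∂_y^j`. -/
noncomputable def pd (i j : ℕ) (u : ℝ × ℝ → ℝ) : ℝ × ℝ → ℝ :=
  pdx^[i] (pdy^[j] u)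

/-!
Multiplying the equation by `2 e^{κx} u` gives a local balance for the energy density `e^{κx} u²`
with an explicit source. On a truncated strip `(0, R) × (0, L)` the flux through `x = 0` has a
favourable sign and the lateral flux vanishes; the flux through `x = R` tends to `0` as `R → ∞`.

For `κ = 0` the source vanishes, so the mass `∫ u²` stays small. For `κ = k` the source is coercive:
the Cauchy–Schwarz and Ladyzhenskaya inequalities bound the cubic term by a small multiple of the
dissipation, and Steklov's inequality in `y`, with constant `(π / L)² = 1 + 4 δ²`, lets
`∫ e^{kx} u_y²` absorb the transport term and leave `-k (δ² + k⁴) ∫ e^{kx} u²`. Grönwall's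
inequality concludes.
-/

open Set Filter Topology

section PartialDerivatives

lemma hasDerivAt_fst {X : Type*} [NormedAddCommGroup X] [NormedSpace ℝ X] {w : ℝ × X → ℝ}
    {p : ℝ × X} (hw : DifferentiableAt ℝ w p) :
    HasDerivAt (fun x => w (x, p.2)) (fderiv ℝ w p (1, 0)) p.1 :=
  HasFDerivAt.comp_hasDerivAt p.1 (f := fun x => (x, p.2)) hw.hasFDerivAt
    ((hasDerivAt_id p.1).prodMk (hasDerivAt_const p.1 p.2))

variable {w : ℝ × ℝ → ℝ}

lemma hasDerivAt_snd {p : ℝ × ℝ} (hw : DifferentiableAt ℝ w p) :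
    HasDerivAt (fun y => w (p.1, y)) (fderiv ℝ w p (0, 1)) p.2 :=
  HasFDerivAt.comp_hasDerivAt p.2 (f := fun y => (p.1, y)) hw.hasFDerivAt
    ((hasDerivAt_const p.2 p.1).prodMk (hasDerivAt_id p.2))

lemma pdx_eq_fderiv (hw : Differentiable ℝ w) : pdx w = fun p => fderiv ℝ w p (1, 0) :=
  funext fun p => (hasDerivAt_fst (hw p)).deriv

lemma pdy_eq_fderiv (hw : Differentiable ℝ w) : pdy w = fun p => fderiv ℝ w p (0, 1) :=
  funext fun p => (hasDerivAt_snd (hw p)).deriv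

lemma hasDerivAt_pdx (hw : Differentiable ℝ w) (x y : ℝ) :
    HasDerivAt (fun s => w (s, y)) (pdx w (x, y)) x := by
  simpa only [pdx_eq_fderiv hw] using hasDerivAt_fst (hw (x, y))

lemma hasDerivAt_pdy (hw : Differentiable ℝ w) (x y : ℝ) :
    HasDerivAt (fun s => w (x, s)) (pdy w (x, y)) y := by
  simpa only [pdy_eq_fderiv hw] using hasDerivAt_snd (hw (x, y))

lemma contDiff_pdx {n : WithTop ℕ∞} (hw : ContDiff ℝ (n + 1) w) : ContDiff ℝ n (pdx w) := by
  rw [pdx_eq_fderiv (hw.differentiable (by simp))]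
  exact (hw.fderiv_right le_rfl).clm_apply contDiff_const

lemma contDiff_pdy {n : WithTop ℕ∞} (hw : ContDiff ℝ (n + 1) w) : ContDiff ℝ n (pdy w) := by
  rw [pdy_eq_fderiv (hw.differentiable (by simp))]
  exact (hw.fderiv_right le_rfl).clm_apply contDiff_const

lemma contDiff_pd {m n : ℕ} (i j : ℕ) (hw : ContDiff ℝ n w) (h : m + i + j ≤ n) :
    ContDiff ℝ m (pd i j w) := by
  have lower_order {D : (ℝ × ℝ → ℝ) → ℝ × ℝ → ℝ}
      (hD : ∀ (l : ℕ) (v : ℝ × ℝ → ℝ), ContDiff ℝ (l + 1) v → ContDiff ℝ l (D v))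
      (v : ℝ × ℝ → ℝ) (l q : ℕ) (hv : ContDiff ℝ (l + q : ℕ) v) : ContDiff ℝ l (D^[q] v) := by
    induction q generalizing v with
    | zero => exact hv
    | succ q ih => exact ih (D v) (hD _ v (mod_cast hv))
  exact lower_order (fun _ _ => contDiff_pdx) _ m i
    (lower_order (fun _ _ => contDiff_pdy) w (m + i) j (hw.of_le (mod_cast h)))

lemma pd_succ_left (i j : ℕ) (w : ℝ × ℝ → ℝ) : pd (i + 1) j w = pdx (pd i j w) :=
  Function.iterate_succ_apply' _ _ _

lemma hasDerivAt_pd (i j : ℕ) (hw : ContDiff ℝ (1 + i + j : ℕ) w) (x y : ℝ) :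
    HasDerivAt (fun s => pd i j w (s, y)) (pd (i + 1) j w (x, y)) x := by
  rw [pd_succ_left]
  exact hasDerivAt_pdx ((contDiff_pd (m := 1) i j hw le_rfl).differentiable (by simp)) x y

lemma pdx_pdy_comm (hw : ContDiff ℝ 2 w) : pdx (pdy w) = pdy (pdx w) := by
  have hdiff : Differentiable ℝ w := hw.differentiable (by simp)
  have hdiff' : Differentiable ℝ (fderiv ℝ w) :=
    (hw.fderiv_right (m := 1) (by norm_num)).differentiable (by simp)
  rw [pdx_eq_fderiv ((contDiff_pdy (n := 1) hw).differentiable (by simp)),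
    pdy_eq_fderiv ((contDiff_pdx (n := 1) hw).differentiable (by simp)),
    pdx_eq_fderiv hdiff, pdy_eq_fderiv hdiff]
  funext p
  have hsymm : IsSymmSndFDerivAt ℝ w p := hw.contDiffAt.isSymmSndFDerivAt (by simp)
  rw [fderiv_clm_apply (hdiff' p) (by fun_prop), fderiv_clm_apply (hdiff' p) (by fun_prop)]
  simpa using hsymm (1, 0) (0, 1)

lemma pdx_sq (hw : Differentiable ℝ w) : pdx (fun p => w p ^ 2) = fun p => 2 * w p * pdx w p :=
  funext fun p => ((hasDerivAt_pdx hw p.1 p.2).fun_pow 2).deriv.trans (by simp)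

lemma pdy_sq (hw : Differentiable ℝ w) : pdy (fun p => w p ^ 2) = fun p => 2 * w p * pdy w p :=
  funext fun p => ((hasDerivAt_pdy hw p.1 p.2).fun_pow 2).deriv.trans (by simp)

end PartialDerivatives

section Steklov

/-- Integrate `0 ≤ (f' + g f)²`; the integral of `(g f²)'` vanishes. -/
lemma integral_riccati_mul_sq_le {f f' g g' : ℝ → ℝ} {a b : ℝ} (hab : a ≤ b)
    (hf : ∀ x ∈ Icc a b, HasDerivAt f (f' x) x) (hf' : ContinuousOn f' (Icc a b))
    (hg : ∀ x ∈ Icc a b, HasDerivAt g (g' x) x) (hg' : ContinuousOn g' (Icc a b))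
    (ha : f a = 0) (hb : f b = 0) :
    ∫ x in a..b, (g' x - g x ^ 2) * f x ^ 2 ≤ ∫ x in a..b, f' x ^ 2 := by
  have hfc : ContinuousOn f (Icc a b) := fun x hx => (hf x hx).continuousAt.continuousWithinAt
  have hgc : ContinuousOn g (Icc a b) := fun x hx => (hg x hx).continuousAt.continuousWithinAt
  have integrable {h : ℝ → ℝ} (hh : ContinuousOn h (Icc a b)) :
      IntervalIntegrable h volume a b := hh.intervalIntegrable_of_Icc hab
  have total_derivative : ∫ x in a..b, (g' x * f x ^ 2 + g x * (2 * f x * f' x)) = 0 := by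
    rw [intervalIntegral.integral_eq_sub_of_hasDerivAt (f := fun x => g x * f x ^ 2)]
    · simp [ha, hb]
    · rw [uIcc_of_le hab]
      exact fun x hx => by simpa using (hg x hx).fun_mul ((hf x hx).fun_pow 2)
    · exact integrable (by fun_prop)
  rw [← add_zero (∫ x in a..b, f' x ^ 2), ← total_derivative, ← intervalIntegral.integral_add
    (integrable (by fun_prop)) (integrable (by fun_prop))]
  refine intervalIntegral.integral_mono_on hab (integrable (by fun_prop))
    (integrable (by fun_prop)) fun x _ => ?_
  linarith [sq_nonneg (f' x + g x * f x)]

lemma sq_mul_integral_sq_le_of_mul_lt_pi {f f' : ℝ → ℝ} {a b μ : ℝ} (hab : a ≤ b) (hμ : 0 ≤ μ)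
    (hμπ : μ * (b - a) < π) (hf : ∀ x ∈ Icc a b, HasDerivAt f (f' x) x)
    (hf' : ContinuousOn f' (Icc a b)) (ha : f a = 0) (hb : f b = 0) :
    μ ^ 2 * ∫ x in a..b, f x ^ 2 ≤ ∫ x in a..b, f' x ^ 2 := by
  -- `g = μ tan (μ (x - (a + b) / 2))` solves the Riccati equation `g' = μ² + g²`.
  set θ : ℝ → ℝ := fun x => μ * (x - (a + b) / 2)
  have hcos : ∀ x ∈ Icc a b, cos (θ x) ≠ 0 := by
    intro x ⟨hax, hxb⟩
    have hlower : μ * a ≤ μ * x := by gcongr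
    have hupper : μ * x ≤ μ * b := by gcongr
    exact (cos_pos_of_mem_Ioo ⟨by simp only [θ]; linarith, by simp only [θ]; linarith⟩).ne'
  have hg : ∀ x ∈ Icc a b, HasDerivAt (fun x => μ * tan (θ x)) (μ ^ 2 / cos (θ x) ^ 2) x := by
    intro x hx
    have hθ : HasDerivAt θ μ x := by
      simpa using ((hasDerivAt_id x).sub_const ((a + b) / 2)).const_mul μ
    exact (((hasDerivAt_tan (hcos x hx)).comp x hθ).const_mul μ).congr_deriv (by ring)
  have hg' : ContinuousOn (fun x => μ ^ 2 / cos (θ x) ^ 2) (Icc a b) :=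
    ContinuousOn.div (by fun_prop) (by fun_prop) fun x hx => pow_ne_zero 2 (hcos x hx)
  have riccati : ∀ x ∈ Icc a b, μ ^ 2 / cos (θ x) ^ 2 - (μ * tan (θ x)) ^ 2 = μ ^ 2 := by
    intro x hx
    rw [tan_eq_sin_div_cos]
    field_simp [hcos x hx]
    rw [cos_sq']
  rw [← intervalIntegral.integral_const_mul]
  refine le_of_eq_of_le (intervalIntegral.integral_congr fun x hx => ?_)
    (integral_riccati_mul_sq_le hab hf hf' hg hg' ha hb)
  simp only [riccati x (uIcc_of_le hab ▸ hx)]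

lemma steklov_inequality {f f' : ℝ → ℝ} {a b : ℝ} (hab : a < b)
    (hf : ∀ x ∈ Icc a b, HasDerivAt f (f' x) x) (hf' : ContinuousOn f' (Icc a b))
    (ha : f a = 0) (hb : f b = 0) :
    (π / (b - a)) ^ 2 * ∫ x in a..b, f x ^ 2 ≤ ∫ x in a..b, f' x ^ 2 := by
  have hlength : 0 < b - a := sub_pos.2 hab
  have hlim : Tendsto (fun μ : ℝ => μ ^ 2 * ∫ x in a..b, f x ^ 2) (𝓝[<] (π / (b - a)))
      (𝓝 ((π / (b - a)) ^ 2 * ∫ x in a..b, f x ^ 2)) :=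
    (Continuous.tendsto (by fun_prop) _).mono_left nhdsWithin_le_nhds
  refine le_of_tendsto hlim ?_
  filter_upwards [Ioo_mem_nhdsLT (show 0 < π / (b - a) by positivity)] with μ hμ
  exact sq_mul_integral_sq_le_of_mul_lt_pi hab.le hμ.1.le ((lt_div_iff₀ hlength).1 hμ.2)
    hf hf' ha hb

end Steklov

section Rectangle

lemma sq_integral_mul_le {α : Type*} [MeasurableSpace α] {μ : Measure α} {f g : α → ℝ}
    (hf : MemLp f 2 μ) (hg : MemLp g 2 μ) :
    (∫ x, f x * g x ∂μ) ^ 2 ≤ (∫ x, f x ^ 2 ∂μ) * ∫ x, g x ^ 2 ∂μ := by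
  have inner_toLp {f g : α → ℝ} (hf : MemLp f 2 μ) (hg : MemLp g 2 μ) :
      inner ℝ (hf.toLp f) (hg.toLp g) = ∫ x, f x * g x ∂μ := by
    rw [L2.inner_def]
    refine integral_congr_ae ?_
    filter_upwards [hf.coeFn_toLp, hg.coeFn_toLp] with x hfx hgx
    rw [hfx, hgx, real_inner_eq_re_inner, RCLike.inner_apply']
    simp
  simpa only [inner_toLp, ← sq] using real_inner_mul_inner_self_le (hf.toLp f) (hg.toLp g)

variable {a b c d : ℝ} {f w : ℝ × ℝ → ℝ}

lemma measurableSet_rectangle : MeasurableSet (Ioo a b ×ˢ Ioo c d) :=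
  measurableSet_Ioo.prod measurableSet_Ioo

lemma rectangle_subset_Icc : Ioo a b ×ˢ Ioo c d ⊆ Icc a b ×ˢ Icc c d :=
  prod_mono Ioo_subset_Icc_self Ioo_subset_Icc_self

lemma rectangle_ae_eq_Icc : (Ioo a b ×ˢ Ioo c d : Set (ℝ × ℝ)) =ᵐ[volume] Icc (a, c) (b, d) := by
  rw [← Icc_prod_Icc]
  exact Measure.set_prod_ae_eq Ioo_ae_eq_Icc Ioo_ae_eq_Icc

lemma integrableOn_rectangle (hf : Continuous f) : IntegrableOn f (Ioo a b ×ˢ Ioo c d) :=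
  (hf.continuousOn.integrableOn_compact (isCompact_Icc.prod isCompact_Icc)).mono_set
    rectangle_subset_Icc

lemma integrable_prod_restrict (hf : Continuous f) :
    Integrable f ((volume.restrict (Ioo a b)).prod (volume.restrict (Ioo c d))) := by
  rw [Measure.prod_restrict]
  exact integrableOn_rectangle hf

lemma memLp_two_rectangle (hf : Continuous f) :
    MemLp f 2 (volume.restrict (Ioo a b ×ˢ Ioo c d)) :=
  (memLp_two_iff_integrable_sq hf.aestronglyMeasurable).2 (integrableOn_rectangle (by fun_prop))

lemma setIntegral_pdx_add_pdy {P Q : ℝ × ℝ → ℝ} (hab : a ≤ b) (hcd : c ≤ d)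
    (hP : ContDiff ℝ 1 P) (hQ : ContDiff ℝ 1 Q) :
    ∫ p in Ioo a b ×ˢ Ioo c d, (pdx P p + pdy Q p) =
      (∫ y in c..d, (P (b, y) - P (a, y))) + ∫ x in a..b, (Q (x, d) - Q (x, c)) := by
  have hPd := hP.differentiable one_ne_zero
  have hQd := hQ.differentiable one_ne_zero
  have hPc := hP.continuous
  have hQc := hQ.continuous
  have integrable {h : ℝ → ℝ} (hh : Continuous h) (s t : ℝ) : IntervalIntegrable h volume s t :=
    hh.intervalIntegrable s t
  have divergence_continuous : Continuous fun p => fderiv ℝ P p (1, 0) + fderiv ℝ Q p (0, 1) :=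
    ((hP.continuous_fderiv one_ne_zero).clm_apply continuous_const).add
      ((hQ.continuous_fderiv one_ne_zero).clm_apply continuous_const)
  rw [setIntegral_congr_set rectangle_ae_eq_Icc, pdx_eq_fderiv hPd, pdy_eq_fderiv hQd,
    integral_divergence_prod_Icc_of_hasFDerivAt_of_le P Q (fderiv ℝ P) (fderiv ℝ Q) (a, c) (b, d)
      ⟨hab, hcd⟩ hPc.continuousOn hQc.continuousOn (fun p _ => (hPd p).hasFDerivAt)
      (fun p _ => (hQd p).hasFDerivAt)
      (divergence_continuous.continuousOn.integrableOn_compact isCompact_Icc),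
    intervalIntegral.integral_sub (integrable (by fun_prop) _ _) (integrable (by fun_prop) _ _),
    intervalIntegral.integral_sub (integrable (by fun_prop) _ _) (integrable (by fun_prop) _ _)]
  ring

lemma mul_setIntegral_mul_sq_le_of_lateral_eq_zero {g : ℝ → ℝ} (hg : Continuous g)
    (hg0 : ∀ x, 0 ≤ g x) (hcd : c < d) (hw : ContDiff ℝ 1 w)
    (hw0 : ∀ x ∈ Ioo a b, w (x, c) = 0 ∧ w (x, d) = 0) :
    (π / (d - c)) ^ 2 * ∫ p in Ioo a b ×ˢ Ioo c d, g p.1 * w p ^ 2 ≤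
      ∫ p in Ioo a b ×ˢ Ioo c d, g p.1 * pdy w p ^ 2 := by
  have hwc := hw.continuous
  have hwy : Continuous (pdy w) := (contDiff_pdy (n := 0) (by simpa using hw)).continuous
  have fubini {v : ℝ × ℝ → ℝ} (hv : Continuous v) :
      ∫ p in Ioo a b ×ˢ Ioo c d, g p.1 * v p ^ 2 =
        ∫ x in Ioo a b, g x * ∫ y in c..d, v (x, y) ^ 2 := by
    simp_rw [intervalIntegral.integral_of_le hcd.le, integral_Ioc_eq_integral_Ioo,
      ← integral_const_mul]
    exact setIntegral_prod _ (integrableOn_rectangle (by fun_prop))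
  have slice_integrable {v : ℝ × ℝ → ℝ} (hv : Continuous v) :
      IntegrableOn (fun x => g x * ∫ y in c..d, v (x, y) ^ 2) (Ioo a b) := by
    refine (Continuous.integrableOn_Icc ?_).mono_set Ioo_subset_Icc_self
    fun_prop
  rw [fubini hwc, fubini hwy, ← integral_const_mul]
  refine setIntegral_mono_on ((slice_integrable hwc).const_mul _) (slice_integrable hwy)
    measurableSet_Ioo fun x hx => ?_
  rw [mul_left_comm]
  exact mul_le_mul_of_nonneg_left (steklov_inequality hcd
    (fun y _ => hasDerivAt_pdy (hw.differentiable one_ne_zero) x y) (by fun_prop)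
    (hw0 x hx).1 (hw0 x hx).2) (hg0 x)

lemma abs_le_integral_abs_deriv {f f' : ℝ → ℝ} {x : ℝ} (hx : x ∈ Icc a b)
    (hf : ∀ s ∈ Icc a b, HasDerivAt f (f' s) s) (hf' : ContinuousOn f' (Icc a b))
    (ha : f a = 0) : |f x| ≤ ∫ s in Ioo a b, |f' s| := by
  have hsub : Icc a x ⊆ Icc a b := Icc_subset_Icc_right hx.2
  have hint : IntervalIntegrable f' volume a x := (hf'.mono hsub).intervalIntegrable_of_Icc hx.1
  calc |f x| = |∫ s in a..x, f' s| := by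
        rw [intervalIntegral.integral_eq_sub_of_hasDerivAt
          (fun s hs => hf s (hsub (uIcc_of_le hx.1 ▸ hs))) hint, ha, sub_zero]
    _ ≤ ∫ s in a..x, |f' s| := intervalIntegral.abs_integral_le_integral_abs hx.1
    _ = ∫ s in Ioo a x, |f' s| := by
        rw [intervalIntegral.integral_of_le hx.1, integral_Ioc_eq_integral_Ioo]
    _ ≤ ∫ s in Ioo a b, |f' s| :=
        setIntegral_mono_set
          ((hf'.abs.integrableOn_compact isCompact_Icc).mono_set Ioo_subset_Icc_self)
          (ae_of_all _ fun _ => abs_nonneg _) (Ioo_subset_Ioo_right hx.2).eventuallyLE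

lemma setIntegral_sq_le_mul_setIntegral_abs (hw : ContDiff ℝ 1 w)
    (hleft : ∀ y ∈ Ioo c d, w (a, y) = 0) (hbottom : ∀ x ∈ Ioo a b, w (x, c) = 0) :
    ∫ p in Ioo a b ×ˢ Ioo c d, w p ^ 2 ≤
      (∫ p in Ioo a b ×ˢ Ioo c d, |pdx w p|) * ∫ p in Ioo a b ×ˢ Ioo c d, |pdy w p| := by
  have hd := hw.differentiable one_ne_zero
  have hwc := hw.continuous
  have hwx : Continuous (pdx w) := (contDiff_pdx (n := 0) (by simpa using hw)).continuous
  have hwy : Continuous (pdy w) := (contDiff_pdy (n := 0) (by simpa using hw)).continuous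
  set F : ℝ → ℝ := fun y => ∫ x in Ioo a b, |pdx w (x, y)|
  set G : ℝ → ℝ := fun x => ∫ y in Ioo c d, |pdy w (x, y)|
  have integral_F : ∫ p in Ioo a b ×ˢ Ioo c d, |pdx w p| = ∫ y in Ioo c d, F y := by
    have h := integral_prod_symm (fun p => |pdx w p|)
      (integrable_prod_restrict (a := a) (b := b) (c := c) (d := d) (by fun_prop))
    rwa [Measure.prod_restrict] at h
  have integral_G : ∫ p in Ioo a b ×ˢ Ioo c d, |pdy w p| = ∫ x in Ioo a b, G x :=
    setIntegral_prod _ (integrableOn_rectangle (by fun_prop))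
  have integrable_GF : IntegrableOn (fun p : ℝ × ℝ => G p.1 * F p.2) (Ioo a b ×ˢ Ioo c d) := by
    have hF : IntegrableOn F (Ioo c d) :=
      (integrable_prod_restrict (f := fun p => |pdx w p|) (by fun_prop)).integral_prod_right
    have hG : IntegrableOn G (Ioo a b) :=
      (integrable_prod_restrict (f := fun p => |pdy w p|) (by fun_prop)).integral_prod_left
    have hGF := Integrable.mul_prod hG hF
    rwa [Measure.prod_restrict] at hGF
  rw [integral_F, integral_G, mul_comm, ← setIntegral_prod_mul G F]
  refine setIntegral_mono_on (integrableOn_rectangle (by fun_prop)) integrable_GF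
    measurableSet_rectangle ?_
  rintro ⟨x, y⟩ ⟨hx, hy⟩
  have hF : |w (x, y)| ≤ F y := abs_le_integral_abs_deriv (Ioo_subset_Icc_self hx)
    (fun s _ => hasDerivAt_pdx hd s y) (by fun_prop) (hleft y hy)
  have hG : |w (x, y)| ≤ G x := abs_le_integral_abs_deriv (Ioo_subset_Icc_self hy)
    (fun s _ => hasDerivAt_pdy hd x s) (by fun_prop) (hbottom x hx)
  calc w (x, y) ^ 2 = |w (x, y)| * |w (x, y)| := by rw [← sq, sq_abs]
    _ ≤ G x * F y := mul_le_mul hG hF (abs_nonneg _) ((abs_nonneg _).trans hG)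

lemma sq_setIntegral_abs_two_mul_le {f g : ℝ × ℝ → ℝ} (hf : Continuous f) (hg : Continuous g) :
    (∫ p in Ioo a b ×ˢ Ioo c d, |2 * f p * g p|) ^ 2 ≤
      4 * ((∫ p in Ioo a b ×ˢ Ioo c d, f p ^ 2) * ∫ p in Ioo a b ×ˢ Ioo c d, g p ^ 2) := by
  have cauchy_schwarz := sq_integral_mul_le (memLp_two_rectangle (a := a) (b := b) (c := c)
    (d := d) hf.abs) (memLp_two_rectangle hg.abs)
  simp only [sq_abs] at cauchy_schwarz
  simp only [mul_assoc, abs_mul, Nat.abs_ofNat, integral_const_mul, mul_pow]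
  linarith

/-- The multiplicative inequality for `w²`, with `∫ |∂(w²)|` bounded by Cauchy–Schwarz. -/
lemma ladyzhenskaya_inequality (hw : ContDiff ℝ 1 w)
    (hleft : ∀ y ∈ Ioo c d, w (a, y) = 0) (hbottom : ∀ x ∈ Ioo a b, w (x, c) = 0) :
    ∫ p in Ioo a b ×ˢ Ioo c d, w p ^ 4 ≤ 2 * (∫ p in Ioo a b ×ˢ Ioo c d, w p ^ 2) *
      ((∫ p in Ioo a b ×ˢ Ioo c d, pdx w p ^ 2) + ∫ p in Ioo a b ×ˢ Ioo c d, pdy w p ^ 2) := by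
  have hd := hw.differentiable one_ne_zero
  have hsq := setIntegral_sq_le_mul_setIntegral_abs (a := a) (b := b) (c := c) (d := d)
    (w := fun p => w p ^ 2) (hw.pow 2)
    (fun y hy => by simp [hleft y hy]) (fun x hx => by simp [hbottom x hx])
  simp only [← pow_mul, pdx_sq hd, pdy_sq hd] at hsq
  have hx := sq_setIntegral_abs_two_mul_le (a := a) (b := b) (c := c) (d := d) hw.continuous
    (contDiff_pdx (n := 0) (by simpa using hw)).continuous
  have hy := sq_setIntegral_abs_two_mul_le (a := a) (b := b) (c := c) (d := d) hw.continuous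
    (contDiff_pdy (n := 0) (by simpa using hw)).continuous
  set E := ∫ p in Ioo a b ×ˢ Ioo c d, w p ^ 2
  set A := ∫ p in Ioo a b ×ˢ Ioo c d, pdx w p ^ 2
  set B := ∫ p in Ioo a b ×ˢ Ioo c d, pdy w p ^ 2
  have hE : 0 ≤ E := integral_nonneg fun p => sq_nonneg _
  have hA : 0 ≤ A := integral_nonneg fun p => sq_nonneg _
  have hB : 0 ≤ B := integral_nonneg fun p => sq_nonneg _
  refine hsq.trans (le_of_abs_le (abs_le_of_sq_le_sq ?_ (by positivity)))
  calc _ ≤ (4 * (E * A)) * (4 * (E * B)) := by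
        rw [mul_pow]
        gcongr
    _ ≤ (2 * E * (A + B)) ^ 2 := by
        nlinarith [mul_nonneg (sq_nonneg E) (sq_nonneg (A - B))]

end Rectangle

section LocalEnergyIdentity

/-- The quadratic form `q` in the jet of `f` for which `(e^{κx} q)'` equals `-2 e^{κx} f f_{xxx}` up
to squares; it collects the boundary terms of the integration by parts. -/
def thirdOrderFlux (κ f₀ f₁ f₂ : ℝ) : ℝ :=
  -2 * f₀ * f₂ + 2 * κ * f₀ * f₁ + f₁ ^ 2 - κ ^ 2 * f₀ ^ 2

/-- The quadratic form `q` in the jet of `f` for which `(e^{κx} q)'` equals `2 e^{κx} f f_{xxxxx}`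
up to squares; it collects the boundary terms of the integration by parts. -/
def fifthOrderFlux (κ f₀ f₁ f₂ f₃ f₄ : ℝ) : ℝ :=
  2 * f₀ * f₄ - 2 * (κ * f₀ + f₁) * f₃ + f₂ ^ 2 + 4 * κ * f₁ * f₂ - 3 * κ ^ 2 * f₁ ^ 2 +
    2 * κ ^ 2 * f₀ * f₂ - 2 * κ ^ 3 * f₀ * f₁ + κ ^ 4 * f₀ ^ 2

/-- The `x`-component of the flux in the local balance of the weighted energy density
`e^{κx} w²` for the Kawahara equation. -/
noncomputable def kawaharaFlux (κ : ℝ) (w : ℝ × ℝ → ℝ) (p : ℝ × ℝ) : ℝ :=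
  exp (κ * p.1) * (-(w p ^ 2 + 2 / 3 * w p ^ 3) + pdy w p ^ 2 +
    thirdOrderFlux κ (w p) (pd 1 0 w p) (pd 2 0 w p) +
    fifthOrderFlux κ (w p) (pd 1 0 w p) (pd 2 0 w p) (pd 3 0 w p) (pd 4 0 w p))

/-- The `y`-component of the flux in the local balance of the weighted energy density. -/
noncomputable def transverseFlux (κ : ℝ) (w : ℝ × ℝ → ℝ) (p : ℝ × ℝ) : ℝ :=
  -(2 * exp (κ * p.1) * w p * pdx (pdy w) p)

/-- The source term in the local balance of the weighted energy density; it vanishes for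
`κ = 0`. -/
noncomputable def energyProduction (κ : ℝ) (w : ℝ × ℝ → ℝ) (p : ℝ × ℝ) : ℝ :=
  exp (κ * p.1) * ((κ + κ ^ 3 - κ ^ 5) * w p ^ 2 + 2 / 3 * κ * w p ^ 3 -
    (3 * κ - 5 * κ ^ 3) * pd 1 0 w p ^ 2 - κ * pdy w p ^ 2 - 5 * κ * pd 2 0 w p ^ 2)

lemma hasDerivAt_exp_mul {G : ℝ → ℝ} {G' x : ℝ} (κ : ℝ) (hG : HasDerivAt G G' x) :
    HasDerivAt (fun s => exp (κ * s) * G s) (exp (κ * x) * (κ * G x + G')) x := by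
  have hexp : HasDerivAt (fun s => exp (κ * s)) (exp (κ * x) * κ) x := by
    simpa using ((hasDerivAt_id x).const_mul κ).exp
  exact (hexp.fun_mul hG).congr_deriv (by ring)

section Jets

variable {f₀ f₁ f₂ f₃ f₄ : ℝ → ℝ} {x : ℝ} (κ : ℝ)

lemma hasDerivAt_exp_mul_thirdOrderFlux {f₃ : ℝ} (h₀ : HasDerivAt f₀ (f₁ x) x)
    (h₁ : HasDerivAt f₁ (f₂ x) x) (h₂ : HasDerivAt f₂ f₃ x) :
    HasDerivAt (fun s => exp (κ * s) * thirdOrderFlux κ (f₀ s) (f₁ s) (f₂ s))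
      (exp (κ * x) * (-2 * f₀ x * f₃ + 3 * κ * f₁ x ^ 2 - κ ^ 3 * f₀ x ^ 2)) x := by
  refine (hasDerivAt_exp_mul κ (((((h₀.const_mul (-2)).fun_mul h₂).fun_add
    ((h₀.const_mul (2 * κ)).fun_mul h₁)).fun_add (h₁.fun_pow 2)).fun_sub
    ((h₀.fun_pow 2).const_mul (κ ^ 2)))).congr_deriv ?_
  simp only [Nat.cast_ofNat, Nat.add_one_sub_one, pow_one]
  ring

lemma hasDerivAt_exp_mul_fifthOrderFlux {f₅ : ℝ} (h₀ : HasDerivAt f₀ (f₁ x) x)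
    (h₁ : HasDerivAt f₁ (f₂ x) x) (h₂ : HasDerivAt f₂ (f₃ x) x) (h₃ : HasDerivAt f₃ (f₄ x) x)
    (h₄ : HasDerivAt f₄ f₅ x) :
    HasDerivAt (fun s => exp (κ * s) * fifthOrderFlux κ (f₀ s) (f₁ s) (f₂ s) (f₃ s) (f₄ s))
      (exp (κ * x) * (2 * f₀ x * f₅ + κ ^ 5 * f₀ x ^ 2 - 5 * κ ^ 3 * f₁ x ^ 2 +
        5 * κ * f₂ x ^ 2)) x := by
  refine (hasDerivAt_exp_mul κ ((((((((h₀.const_mul 2).fun_mul h₄).fun_sub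
    ((((h₀.const_mul κ).fun_add h₁).const_mul 2).fun_mul h₃)).fun_add (h₂.fun_pow 2)).fun_add
    ((h₁.const_mul (4 * κ)).fun_mul h₂)).fun_sub ((h₁.fun_pow 2).const_mul (3 * κ ^ 2))).fun_add
    ((h₀.const_mul (2 * κ ^ 2)).fun_mul h₂)).fun_sub
    ((h₀.const_mul (2 * κ ^ 3)).fun_mul h₁) |>.fun_add
    ((h₀.fun_pow 2).const_mul (κ ^ 4)))).congr_deriv ?_
  simp only [Nat.cast_ofNat, Nat.add_one_sub_one, pow_one]
  ring

end Jets

variable {w : ℝ × ℝ → ℝ} (κ : ℝ)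

lemma contDiff_kawaharaFlux (hw : ContDiff ℝ 5 w) : ContDiff ℝ 1 (kawaharaFlux κ w) := by
  have hw₀ : ContDiff ℝ 1 w := hw.of_le (by norm_num)
  have hy : ContDiff ℝ 1 (pdy w) := contDiff_pdy (hw.of_le (by norm_num))
  have hx (i : ℕ) (hi : i ≤ 4) : ContDiff ℝ 1 (pd i 0 w) :=
    contDiff_pd (m := 1) (n := 5) i 0 hw (by lia)
  have h₁ := hx 1 (by simp)
  have h₂ := hx 2 (by simp)
  have h₃ := hx 3 (by simp)
  have h₄ := hx 4 le_rfl
  unfold kawaharaFlux thirdOrderFlux fifthOrderFlux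
  fun_prop

lemma contDiff_transverseFlux (hw : ContDiff ℝ 3 w) : ContDiff ℝ 1 (transverseFlux κ w) := by
  have hw₀ : ContDiff ℝ 1 w := hw.of_le (by norm_num)
  have hxy : ContDiff ℝ 1 (pdx (pdy w)) :=
    contDiff_pdx (contDiff_pdy (hw.of_le (by norm_num)))
  unfold transverseFlux
  fun_prop

lemma continuous_energyProduction (hw : ContDiff ℝ 2 w) : Continuous (energyProduction κ w) := by
  have hw₀ := hw.continuous
  have hy : Continuous (pdy w) := (contDiff_pdy (n := 0) (hw.of_le (by norm_num))).continuous
  have hx : Continuous (pd 1 0 w) :=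
    (contDiff_pd (m := 0) (n := 2) 1 0 hw (by simp)).continuous
  have hxx : Continuous (pd 2 0 w) := (contDiff_pd (m := 0) (n := 2) 2 0 hw le_rfl).continuous
  unfold energyProduction
  fun_prop

lemma pdy_transverseFlux (hw : ContDiff ℝ 3 w) (p : ℝ × ℝ) :
    pdy (transverseFlux κ w) p =
      -2 * exp (κ * p.1) * (pdy w p * pdx (pdy w) p + w p * pd 1 2 w p) := by
  have hwy : ContDiff ℝ 2 (pdy w) := contDiff_pdy (hw.of_le (by norm_num))
  have hxy : ContDiff ℝ 1 (pdx (pdy w)) := contDiff_pdx (hwy.of_le (by norm_num))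
  have hxyy : pd 1 2 w = pdy (pdx (pdy w)) := pdx_pdy_comm hwy
  rw [hxyy]
  exact ((((hasDerivAt_pdy (hw.differentiable (by simp)) p.1 p.2).const_mul
    (2 * exp (κ * p.1))).fun_mul (hasDerivAt_pdy (hxy.differentiable one_ne_zero) p.1
    p.2)).fun_neg).deriv.trans (by ring)

lemma pdx_kawaharaFlux (hw : ContDiff ℝ 5 w) (p : ℝ × ℝ) :
    pdx (kawaharaFlux κ w) p = exp (κ * p.1) *
      (2 * w p * (-pd 1 0 w p - w p * pd 1 0 w p - pd 3 0 w p + pd 5 0 w p) +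
        2 * pdy w p * pdx (pdy w) p) - energyProduction κ w p := by
  have hyd : Differentiable ℝ (pdy w) :=
    (contDiff_pdy (n := 1) (hw.of_le (by norm_num))).differentiable one_ne_zero
  set f : ℕ → ℝ → ℝ := fun i s => pd i 0 w (s, p.2)
  have hf (i : ℕ) (hi : i ≤ 4) : HasDerivAt (f i) (f (i + 1) p.1) p.1 :=
    hasDerivAt_pd i 0 (hw.of_le (mod_cast by lia)) p.1 p.2
  have h₀ := hf 0 (by simp)
  have h₁ := hf 1 (by simp)
  have h₂ := hf 2 (by simp)
  have transport := hasDerivAt_exp_mul κ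
    ((h₀.fun_pow 2).fun_add ((h₀.fun_pow 3).const_mul (2 / 3))).fun_neg
  have transverse := hasDerivAt_exp_mul κ ((hasDerivAt_pdx hyd p.1 p.2).fun_pow 2)
  have third := hasDerivAt_exp_mul_thirdOrderFlux (f₁ := f 1) (f₂ := f 2) κ h₀ h₁ h₂
  have fifth := hasDerivAt_exp_mul_fifthOrderFlux (f₁ := f 1) (f₂ := f 2) (f₃ := f 3) (f₄ := f 4)
    κ h₀ h₁ h₂ (hf 3 (by simp)) (hf 4 le_rfl)
  have total := ((transport.fun_add transverse).fun_add third).fun_add fifth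
  simp only [← mul_add] at total
  refine total.deriv.trans ?_
  have hw₀ : pd 0 0 w = w := rfl
  simp only [energyProduction, f, hw₀]
  push_cast
  ring

/-- Multiply the equation by `2 e^{κx} w` and integrate by parts pointwise. -/
lemma local_energy_identity (hw : ContDiff ℝ 5 w) {p : ℝ × ℝ} {v : ℝ}
    (heq : v + pdx w p + w p * pdx w p + pd 3 0 w p + pd 1 2 w p - pd 5 0 w p = 0) :
    exp (κ * p.1) * (2 * w p * v) =
      energyProduction κ w p + (pdx (kawaharaFlux κ w) p + pdy (transverseFlux κ w) p) := by
  have hx : pd 1 0 w p = pdx w p := rfl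
  rw [pdx_kawaharaFlux κ hw, pdy_transverseFlux κ (hw.of_le (by norm_num)), hx]
  linear_combination 2 * exp (κ * p.1) * w p * heq

end LocalEnergyIdentity

section TimeDerivative

variable {X : Type*} [NormedAddCommGroup X] [NormedSpace ℝ X] {F : ℝ → X → ℝ}

lemma continuous_deriv_time (hF : ContDiff ℝ 1 (Function.uncurry F)) :
    Continuous fun q : ℝ × X => deriv (fun τ => F τ q.2) q.1 := by
  have hderiv (q : ℝ × X) : deriv (fun τ => F τ q.2) q.1 = fderiv ℝ (Function.uncurry F) q (1, 0) :=
    (hasDerivAt_fst (hF.differentiable one_ne_zero q)).deriv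
  simpa only [hderiv] using (hF.continuous_fderiv one_ne_zero).clm_apply continuous_const

lemma hasDerivAt_setIntegral_of_subset_isCompact [MeasurableSpace X] [BorelSpace X]
    [SecondCountableTopology X] {μ : Measure X} [IsFiniteMeasureOnCompacts μ] {s K : Set X}
    (hF : ContDiff ℝ 1 (Function.uncurry F)) (hK : IsCompact K) (hsK : s ⊆ K) (t : ℝ) :
    HasDerivAt (fun τ => ∫ x in s, F τ x ∂μ) (∫ x in s, deriv (fun τ => F τ x) t ∂μ) t := by
  have hslice (τ : ℝ) : Continuous (F τ) := hF.continuous.comp (Continuous.prodMk_right τ)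
  have hderiv := continuous_deriv_time hF
  obtain ⟨C, hC⟩ := ((isCompact_Icc (a := t - 1) (b := t + 1)).prod hK).exists_bound_of_continuousOn
    hderiv.continuousOn
  refine (hasDerivAt_integral_of_dominated_loc_of_deriv_le (bound := fun _ => C)
    (Icc_mem_nhds (sub_one_lt t) (lt_add_one t))
    (Eventually.of_forall fun τ => (hslice τ).aestronglyMeasurable)
    (((hslice t).continuousOn.integrableOn_compact hK).mono_set hsK)
    (F' := fun τ x => deriv (fun τ => F τ x) τ)
    (hderiv.comp (Continuous.prodMk_right t)).aestronglyMeasurable ?_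
    ((continuousOn_const.integrableOn_compact hK).mono_set hsK) (ae_of_all _ fun x τ _ => ?_)).2
  · exact ae_restrict_of_ae_restrict_of_subset hsK
      (ae_restrict_of_forall_mem hK.measurableSet fun x hx τ hτ => hC (τ, x) ⟨hτ, hx⟩)
  · exact (hasDerivAt_fst (hF.differentiable one_ne_zero (τ, x))).differentiableAt.hasDerivAt

end TimeDerivative

section HalfStrip

/-- The half-strip `(0, ∞) × (0, L)`. -/
def halfStrip (L : ℝ) : Set (ℝ × ℝ) := Ioi 0 ×ˢ Ioo 0 L

/-- The part `x < R` of the half-strip, on which all integrations by parts are carried out. -/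
abbrev truncatedStrip (R L : ℝ) : Set (ℝ × ℝ) := Ioo 0 R ×ˢ Ioo 0 L

/-- The energy `∫_S e^{κx} w²` with exponential weight. -/
noncomputable def weightedEnergy (κ : ℝ) (S : Set (ℝ × ℝ)) (w : ℝ × ℝ → ℝ) : ℝ :=
  ∫ p in S, exp (κ * p.1) * w p ^ 2

variable {L : ℝ}

lemma measurableSet_halfStrip : MeasurableSet (halfStrip L) :=
  measurableSet_Ioi.prod measurableSet_Ioo

lemma truncatedStrip_subset_halfStrip {R : ℝ} : truncatedStrip R L ⊆ halfStrip L :=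
  prod_mono Ioo_subset_Ioi_self Subset.rfl

lemma aecover_truncatedStrip :
    AECover (volume.restrict (halfStrip L)) atTop fun R => truncatedStrip R L :=
  aecover_restrict_of_ae_imp measurableSet_halfStrip
    (ae_of_all _ fun p hp => (eventually_gt_atTop p.1).mono fun _ hR => ⟨⟨hp.1, hR⟩, hp.2⟩)
    fun _ => measurableSet_rectangle

lemma integrableOn_halfStrip_and_setIntegral_le {f : ℝ × ℝ → ℝ} {I : ℝ} (hf : Continuous f)
    (hf0 : ∀ p, 0 ≤ f p) (hI : ∀ᶠ R in atTop, ∫ p in truncatedStrip R L, f p ≤ I) :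
    IntegrableOn f (halfStrip L) ∧ ∫ p in halfStrip L, f p ≤ I := by
  have hrestrict (R : ℝ) : (volume.restrict (halfStrip L)).restrict (truncatedStrip R L) =
      volume.restrict (truncatedStrip R L) :=
    Measure.restrict_restrict_of_subset truncatedStrip_subset_halfStrip
  have hI' : ∀ᶠ R in atTop, ∫ p in truncatedStrip R L, f p ∂volume.restrict (halfStrip L) ≤ I := by
    simpa only [hrestrict] using hI
  have hint : IntegrableOn f (halfStrip L) :=
    aecover_truncatedStrip.integrable_of_integral_bounded_of_nonneg_ae I
      (fun R => by simpa only [IntegrableOn, hrestrict] using integrableOn_rectangle hf)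
      (ae_of_all _ hf0) hI'
  exact ⟨hint, le_of_tendsto
    (aecover_truncatedStrip.integral_tendsto_of_countably_generated hint) hI'⟩

lemma weightedEnergy_truncatedStrip_le {κ R : ℝ} {w : ℝ × ℝ → ℝ}
    (hw : IntegrableOn (fun p => exp (κ * p.1) * w p ^ 2) (halfStrip L)) :
    weightedEnergy κ (truncatedStrip R L) w ≤ weightedEnergy κ (halfStrip L) w :=
  setIntegral_mono_set hw (ae_of_all _ fun _ => by positivity)
    truncatedStrip_subset_halfStrip.eventuallyLE

lemma exp_mul_sq_le_of_mem_halfStrip {κ k : ℝ} (hκ : κ ≤ k) (w : ℝ × ℝ → ℝ) {p : ℝ × ℝ}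
    (hp : p ∈ halfStrip L) : exp (κ * p.1) * w p ^ 2 ≤ exp (k * p.1) * w p ^ 2 := by
  have hx : 0 ≤ p.1 := le_of_lt hp.1
  gcongr

lemma integrableOn_exp_mul_sq_of_le {κ k : ℝ} (hκ : κ ≤ k) {w : ℝ × ℝ → ℝ} (hwc : Continuous w)
    (hw : IntegrableOn (fun p => exp (k * p.1) * w p ^ 2) (halfStrip L)) :
    IntegrableOn (fun p => exp (κ * p.1) * w p ^ 2) (halfStrip L) := by
  refine hw.mono' (Continuous.aestronglyMeasurable (by fun_prop))
    (ae_restrict_of_forall_mem measurableSet_halfStrip fun p hp => ?_)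
  rw [norm_of_nonneg (by positivity)]
  exact exp_mul_sq_le_of_mem_halfStrip hκ w hp

end HalfStrip

section FluxDecay

lemma exp_half_sq (s : ℝ) : exp (s / 2) ^ 2 = exp s := by
  rw [sq, ← exp_add, add_halves]

lemma tendsto_exp_mul_zero_of_le {ι : Type*} {l : Filter ι} {x v : ι → ℝ} {κ k : ℝ} (hκ : κ ≤ k)
    (hx : ∀ᶠ i in l, 0 ≤ x i) (hv : Tendsto (fun i => exp (k * x i / 2) * v i) l (𝓝 0)) :
    Tendsto (fun i => exp (κ * x i / 2) * v i) l (𝓝 0) := by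
  refine squeeze_zero_norm' (hx.mono fun i hi => ?_) (tendsto_zero_iff_norm_tendsto_zero.1 hv)
  rw [norm_mul, norm_mul, norm_of_nonneg (exp_pos _).le, norm_of_nonneg (exp_pos _).le]
  gcongr

lemma tendsto_kawaharaFlux {ι : Type*} {l : Filter ι} {w : ι → ℝ × ℝ → ℝ} {p : ι → ℝ × ℝ}
    {κ k : ℝ} (hκ : κ ≤ k) (hk : 0 ≤ k) (hp : ∀ᶠ i in l, 0 ≤ (p i).1)
    (hx : ∀ j ≤ 4, Tendsto (fun i => exp (k * (p i).1 / 2) * pd j 0 (w i) (p i)) l (𝓝 0))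
    (hy : Tendsto (fun i => exp (k * (p i).1 / 2) * pdy (w i) (p i)) l (𝓝 0)) :
    Tendsto (fun i => kawaharaFlux κ (w i) (p i)) l (𝓝 0) := by
  have hw : Tendsto (fun i => w i (p i)) l (𝓝 0) := by
    simpa [pd] using tendsto_exp_mul_zero_of_le hk hp (hx 0 (by simp))
  have weighted {v : ι → ℝ} (hv : Tendsto (fun i => exp (k * (p i).1 / 2) * v i) l (𝓝 0)) :=
    tendsto_exp_mul_zero_of_le hκ hp hv
  let polynomial (z : (ℝ × ℝ) × (Fin 5 → ℝ)) : ℝ :=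
    z.1.2 ^ 2 - (1 + 2 / 3 * z.1.1) * z.2 0 ^ 2 + thirdOrderFlux κ (z.2 0) (z.2 1) (z.2 2) +
      fifthOrderFlux κ (z.2 0) (z.2 1) (z.2 2) (z.2 3) (z.2 4)
  have hpolynomial : Continuous polynomial := by
    unfold polynomial thirdOrderFlux fifthOrderFlux
    fun_prop
  have hlim := (hpolynomial.tendsto 0).comp ((hw.prodMk_nhds (weighted hy)).prodMk_nhds
    (tendsto_pi_nhds.2 fun j : Fin 5 => weighted (hx j (Fin.is_le j))))
  have hzero : polynomial 0 = 0 := by simp [polynomial, thirdOrderFlux, fifthOrderFlux]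
  rw [hzero] at hlim
  refine hlim.congr fun i => ?_
  have hw₀ : pd 0 0 (w i) = w i := rfl
  simp only [Function.comp_apply, polynomial, kawaharaFlux, thirdOrderFlux, fifthOrderFlux,
    ← exp_half_sq (κ * (p i).1), Fin.coe_ofNat_eq_mod, Nat.zero_mod, Nat.one_mod, Nat.reduceMod,
    hw₀]
  ring

end FluxDecay

section EnergyInequality

variable {κ ε R L : ℝ} {w : ℝ × ℝ → ℝ}

lemma kawaharaFlux_nonneg_of_boundary {y : ℝ} (hw : ∀ᶠ s in 𝓝 y, w (0, s) = 0)
    (hwx : pdx w (0, y) = 0) : 0 ≤ kawaharaFlux κ w (0, y) := by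
  have hy : pdy w (0, y) = 0 := by
    simpa only [pdy, deriv_const'] using
      EventuallyEq.deriv_eq (f₁ := fun s => w (0, s)) (f := fun _ => 0) hw
  have hx : pd 1 0 w (0, y) = 0 := hwx
  simp only [kawaharaFlux, thirdOrderFlux, fifthOrderFlux, hw.self_of_nhds, hx, hy]
  norm_num
  positivity

/-- The flux through `x = 0` has a favourable sign, and that through the lateral boundary
vanishes. -/
lemma setIntegral_weighted_energy_le {v : ℝ × ℝ → ℝ} (hR : 0 ≤ R) (hL : 0 ≤ L)
    (hw : ContDiff ℝ 5 w)
    (heq : ∀ p ∈ truncatedStrip R L,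
      v p + pdx w p + w p * pdx w p + pd 3 0 w p + pd 1 2 w p - pd 5 0 w p = 0)
    (hleft : ∀ y ∈ Ioo 0 L, w (0, y) = 0 ∧ pdx w (0, y) = 0)
    (hlateral : ∀ x > 0, w (x, 0) = 0 ∧ w (x, L) = 0)
    (hflux : ∀ y ∈ Ioo 0 L, kawaharaFlux κ w (R, y) ≤ ε) :
    ∫ p in truncatedStrip R L, exp (κ * p.1) * (2 * w p * v p) ≤
      (∫ p in truncatedStrip R L, energyProduction κ w p) + L * ε := by
  have hP := contDiff_kawaharaFlux κ hw
  have hPc : Continuous (kawaharaFlux κ w) := hP.continuous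
  have hQ : ContDiff ℝ 1 (transverseFlux κ w) := contDiff_transverseFlux κ (hw.of_le (by norm_num))
  have divergence_continuous : Continuous
      fun p => pdx (kawaharaFlux κ w) p + pdy (transverseFlux κ w) p :=
    (contDiff_pdx (n := 0) (by simpa using hP)).continuous.add
      (contDiff_pdy (n := 0) (by simpa using hQ)).continuous
  have longitudinal : ∫ y in (0)..L, (kawaharaFlux κ w (R, y) - kawaharaFlux κ w (0, y)) ≤
      L * ε := by
    calc _ ≤ ∫ _ in (0)..L, ε := by
          refine intervalIntegral.integral_mono_on_of_le_Ioo hL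
            (Continuous.intervalIntegrable (by fun_prop) _ _) (by simp) fun y hy => ?_
          have h0 : 0 ≤ kawaharaFlux κ w (0, y) := kawaharaFlux_nonneg_of_boundary
            (eventually_of_mem (Ioo_mem_nhds hy.1 hy.2) fun s hs => (hleft s hs).1) (hleft y hy).2
          linarith [hflux y hy]
      _ = L * ε := by simp
  have transverse :
      ∫ x in (0)..R, (transverseFlux κ w (x, L) - transverseFlux κ w (x, 0)) = 0 := by
    refine intervalIntegral.integral_zero_ae (ae_of_all _ fun x hx => ?_)
    obtain ⟨hbottom, htop⟩ := hlateral x (uIoc_of_le hR ▸ hx).1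
    simp [transverseFlux, hbottom, htop]
  calc _ = ∫ p in truncatedStrip R L, (energyProduction κ w p +
        (pdx (kawaharaFlux κ w) p + pdy (transverseFlux κ w) p)) :=
        setIntegral_congr_fun measurableSet_rectangle fun p hp =>
          local_energy_identity κ hw (heq p hp)
    _ = (∫ p in truncatedStrip R L, energyProduction κ w p) +
        ∫ y in (0)..L, (kawaharaFlux κ w (R, y) - kawaharaFlux κ w (0, y)) := by
        rw [integral_add (integrableOn_rectangle
          (continuous_energyProduction κ (hw.of_le (by norm_num))))
          (integrableOn_rectangle divergence_continuous), setIntegral_pdx_add_pdy hR hL hP hQ,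
          transverse, add_zero]
    _ ≤ _ := by gcongr

end EnergyInequality

section Evolution

/-- `u` is a `C⁵` solution on `[0, T]` of the Kawahara equation
`u_t + u_x + u u_x + u_{xxx} + u_{xyy} - u_{xxxxx} = 0` in the half-strip, with homogeneous boundary
conditions. Smoothness is required on the whole space, the equation and the boundary conditions only
for `t ∈ [0, T]` on the half-strip and its sides. -/
structure IsKawaharaSolution (L T : ℝ) (u : ℝ → ℝ × ℝ → ℝ) : Prop where
  contDiff : ContDiff ℝ 5 (Function.uncurry u)
  equation : ∀ t ∈ Icc 0 T, ∀ p ∈ halfStrip L, deriv (fun s => u s p) t + pdx (u t) p +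
    u t p * pdx (u t) p + pd 3 0 (u t) p + pd 1 2 (u t) p - pd 5 0 (u t) p = 0
  left_boundary : ∀ t ∈ Icc 0 T, ∀ y ∈ Ioo 0 L, u t (0, y) = 0 ∧ pdx (u t) (0, y) = 0
  lateral_boundary : ∀ t ∈ Icc 0 T, ∀ x > 0, u t (x, 0) = 0 ∧ u t (x, L) = 0

/-- Decay of `e^{kx/2} v` as `x → ∞`, uniformly for `t ∈ [0, T]` and `y ∈ (0, L)`. -/
def HasWeightedDecay (k L T : ℝ) (v : ℝ → ℝ × ℝ → ℝ) : Prop :=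
  TendstoUniformlyOn (fun x (q : ℝ × ℝ) => exp (k * x / 2) * v q.1 (x, q.2)) (fun _ => 0) atTop
    (Icc 0 T ×ˢ Ioo 0 L)

variable {κ k K L R T ε : ℝ} {u : ℝ → ℝ × ℝ → ℝ}

lemma eventually_kawaharaFlux_le (hκ : κ ≤ k) (hk : 0 ≤ k)
    (hx : ∀ j ≤ 4, HasWeightedDecay k L T fun t => pd j 0 (u t))
    (hy : HasWeightedDecay k L T fun t => pdy (u t)) (hε : 0 < ε) :
    ∀ᶠ R in atTop, ∀ t ∈ Icc 0 T, ∀ y ∈ Ioo 0 L, kawaharaFlux κ (u t) (R, y) ≤ ε := by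
  simp only [HasWeightedDecay, ← tendsto_prod_principal_iff] at hx hy
  have hlim := tendsto_kawaharaFlux (l := atTop ×ˢ 𝓟 (Icc 0 T ×ˢ Ioo 0 L))
    (w := fun z : ℝ × ℝ × ℝ => u z.2.1) (p := fun z => (z.1, z.2.2)) hκ hk
    (tendsto_fst.eventually (eventually_ge_atTop 0)) hx hy
  filter_upwards [eventually_prod_principal_iff.1 (hlim.eventually_le_const hε)] with R hR t ht y hy
  exact hR (t, y) ⟨ht, hy⟩

lemma IsKawaharaSolution.contDiff_slice (hu : IsKawaharaSolution L T u) (t : ℝ) :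
    ContDiff ℝ 5 (u t) :=
  hu.contDiff.comp (contDiff_prodMk_right t)

lemma IsKawaharaSolution.hasDerivAt_weightedEnergy (hu : IsKawaharaSolution L T u) (t : ℝ) :
    HasDerivAt (fun τ => weightedEnergy κ (truncatedStrip R L) (u τ))
      (∫ p in truncatedStrip R L, exp (κ * p.1) * (2 * u t p * deriv (fun τ => u τ p) t)) t := by
  have hu₁ : ContDiff ℝ 1 (Function.uncurry u) := hu.contDiff.of_le (by norm_num)
  have hF : ContDiff ℝ 1 (Function.uncurry fun τ (p : ℝ × ℝ) => exp (κ * p.1) * u τ p ^ 2) := by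
    have hu₁' : ContDiff ℝ 1 fun q : ℝ × ℝ × ℝ => u q.1 q.2 := hu₁
    unfold Function.uncurry
    fun_prop
  refine (hasDerivAt_setIntegral_of_subset_isCompact hF (isCompact_Icc.prod isCompact_Icc)
    rectangle_subset_Icc t).congr_deriv (integral_congr_ae (ae_of_all _ fun p => ?_))
  have hut : HasDerivAt (fun τ => u τ p) (deriv (fun τ => u τ p) t) t :=
    (hasDerivAt_fst (hu₁.differentiable one_ne_zero (t, p))).differentiableAt.hasDerivAt
  exact ((hut.fun_pow 2).const_mul (exp (κ * p.1))).deriv.trans (by simp)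

lemma IsKawaharaSolution.weightedEnergy_truncatedStrip_le_gronwallBound
    (hu : IsKawaharaSolution L T u) (hR : 0 ≤ R) (hL : 0 ≤ L)
    (hflux : ∀ t ∈ Icc 0 T, ∀ y ∈ Ioo 0 L, kawaharaFlux κ (u t) (R, y) ≤ ε)
    (hproduction : ∀ t ∈ Icc 0 T, ∫ p in truncatedStrip R L, energyProduction κ (u t) p ≤
      K * weightedEnergy κ (truncatedStrip R L) (u t)) {I : ℝ}
    (hI : weightedEnergy κ (truncatedStrip R L) (u 0) ≤ I) :
    ∀ t ∈ Icc 0 T, weightedEnergy κ (truncatedStrip R L) (u t) ≤ gronwallBound I K (L * ε) t := by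
  have hderiv := hu.hasDerivAt_weightedEnergy (κ := κ) (R := R)
  have energy_inequality : ∀ t ∈ Ico 0 T, ∫ p in truncatedStrip R L,
      exp (κ * p.1) * (2 * u t p * deriv (fun τ => u τ p) t) ≤
        K * weightedEnergy κ (truncatedStrip R L) (u t) + L * ε := by
    intro t ht
    replace ht : t ∈ Icc 0 T := Ico_subset_Icc_self ht
    exact (setIntegral_weighted_energy_le hR hL (hu.contDiff_slice t)
      (fun p hp => hu.equation t ht p (truncatedStrip_subset_halfStrip hp))
      (hu.left_boundary t ht) (hu.lateral_boundary t ht) (hflux t ht)).trans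
      (by gcongr; exact hproduction t ht)
  simpa only [sub_zero] using le_gronwallBound_of_liminf_deriv_right_le
    (fun t _ => (hderiv t).continuousAt.continuousWithinAt)
    (fun t _ _ => (hderiv t).hasDerivWithinAt.liminf_right_slope_le) hI energy_inequality

/-- Grönwall on truncated strips, where the boundary flux costs an error that disappears as
`R → ∞`. -/
lemma IsKawaharaSolution.integrableOn_and_weightedEnergy_le (hu : IsKawaharaSolution L T u)
    (hL : 0 ≤ L)
    (hflux : ∀ ε > 0, ∀ᶠ R in atTop, ∀ t ∈ Icc 0 T, ∀ y ∈ Ioo 0 L,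
      kawaharaFlux κ (u t) (R, y) ≤ ε)
    (hproduction : ∀ R ≥ 0, ∀ t ∈ Icc 0 T,
      ∫ p in truncatedStrip R L, energyProduction κ (u t) p ≤
        K * weightedEnergy κ (truncatedStrip R L) (u t))
    (hu₀ : IntegrableOn (fun p => exp (κ * p.1) * u 0 p ^ 2) (halfStrip L)) :
    ∀ t ∈ Icc 0 T, IntegrableOn (fun p => exp (κ * p.1) * u t p ^ 2) (halfStrip L) ∧
      weightedEnergy κ (halfStrip L) (u t) ≤
        weightedEnergy κ (halfStrip L) (u 0) * exp (K * t) := by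
  intro t ht
  set I := weightedEnergy κ (halfStrip L) (u 0)
  have hut : Continuous (u t) := (hu.contDiff_slice t).continuous
  have approximate {ε : ℝ} (hε : 0 < ε) :
      IntegrableOn (fun p => exp (κ * p.1) * u t p ^ 2) (halfStrip L) ∧
        weightedEnergy κ (halfStrip L) (u t) ≤ gronwallBound I K (L * ε) t := by
    refine integrableOn_halfStrip_and_setIntegral_le (by fun_prop) (fun p => by positivity) ?_
    filter_upwards [hflux ε hε, eventually_ge_atTop 0] with R hR hR0
    exact hu.weightedEnergy_truncatedStrip_le_gronwallBound hR0 hL hR (hproduction R hR0)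
      (weightedEnergy_truncatedStrip_le hu₀) t ht
  have hlim : Tendsto (fun ε => gronwallBound I K (L * ε) t) (𝓝[>] 0) (𝓝 (I * exp (K * t))) := by
    have hcont := (gronwallBound_continuous_ε I K t).comp (continuous_const_mul L)
    simpa only [Function.comp_def, mul_zero, gronwallBound_ε0] using
      (hcont.tendsto 0).mono_left (nhdsWithin_le_nhds (s := Ioi 0))
  exact ⟨(approximate one_pos).1,
    ge_of_tendsto hlim (eventually_mem_nhdsWithin.mono fun ε hε => (approximate hε).2)⟩

end Evolution

section Coercivity

variable {κ k d m R L : ℝ} {w : ℝ × ℝ → ℝ}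

lemma weightedEnergy_nonneg {S : Set (ℝ × ℝ)} : 0 ≤ weightedEnergy κ S w :=
  integral_nonneg fun _ => by positivity

lemma exp_half_mul_sq (κ x v : ℝ) : (exp (κ / 2 * x) * v) ^ 2 = exp (κ * x) * v ^ 2 := by
  rw [mul_pow, ← mul_div_right_comm, exp_half_sq]

lemma pdx_exp_mul (hw : Differentiable ℝ w) (p : ℝ × ℝ) :
    pdx (fun q => exp (κ * q.1) * w q) p = exp (κ * p.1) * (κ * w p + pdx w p) :=
  (hasDerivAt_exp_mul κ (hasDerivAt_pdx hw p.1 p.2)).deriv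

lemma pdy_exp_mul (hw : Differentiable ℝ w) (p : ℝ × ℝ) :
    pdy (fun q => exp (κ * q.1) * w q) p = exp (κ * p.1) * pdy w p :=
  ((hasDerivAt_pdy hw p.1 p.2).const_mul (exp (κ * p.1))).deriv

lemma setIntegral_pdx_exp_half_mul_sq_le (hw : ContDiff ℝ 1 w) :
    ∫ p in truncatedStrip R L, pdx (fun q => exp (κ / 2 * q.1) * w q) p ^ 2 ≤
      2 * weightedEnergy κ (truncatedStrip R L) (pdx w) +
        κ ^ 2 / 2 * weightedEnergy κ (truncatedStrip R L) w := by
  have hwc := hw.continuous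
  have hwx : Continuous (pdx w) := (contDiff_pdx (n := 0) (by simpa using hw)).continuous
  simp only [pdx_exp_mul (hw.differentiable one_ne_zero), exp_half_mul_sq, weightedEnergy,
    ← integral_const_mul]
  rw [← integral_add (integrableOn_rectangle (by fun_prop)) (integrableOn_rectangle (by fun_prop))]
  refine integral_mono (integrableOn_rectangle (by fun_prop)) (integrableOn_rectangle (by fun_prop))
    fun p => ?_
  calc exp (κ * p.1) * (κ / 2 * w p + pdx w p) ^ 2
      ≤ exp (κ * p.1) * (2 * ((κ / 2 * w p) ^ 2 + pdx w p ^ 2)) := by gcongr; exact add_sq_le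
    _ = _ := by ring

/-- Ladyzhenskaya's inequality for `e^{κx/2} w`. -/
lemma weighted_ladyzhenskaya_inequality (hw : ContDiff ℝ 1 w) (hleft : ∀ y ∈ Ioo 0 L, w (0, y) = 0)
    (hbottom : ∀ x ∈ Ioo 0 R, w (x, 0) = 0) :
    ∫ p in truncatedStrip R L, (exp (κ * p.1) * w p ^ 2) ^ 2 ≤
      weightedEnergy κ (truncatedStrip R L) w * (κ ^ 2 * weightedEnergy κ (truncatedStrip R L) w +
        4 * weightedEnergy κ (truncatedStrip R L) (pdx w) +
        2 * weightedEnergy κ (truncatedStrip R L) (pdy w)) := by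
  set φ : ℝ × ℝ → ℝ := fun p => exp (κ / 2 * p.1) * w p
  have φ_sq (p : ℝ × ℝ) : φ p ^ 2 = exp (κ * p.1) * w p ^ 2 := exp_half_mul_sq κ p.1 (w p)
  have φ_pow_four (p : ℝ × ℝ) : φ p ^ 4 = (exp (κ * p.1) * w p ^ 2) ^ 2 := by
    rw [← φ_sq, ← pow_mul]
  have pdy_φ_sq (p : ℝ × ℝ) : pdy φ p ^ 2 = exp (κ * p.1) * pdy w p ^ 2 := by
    rw [pdy_exp_mul (hw.differentiable one_ne_zero), exp_half_mul_sq]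
  have ladyzhenskaya := ladyzhenskaya_inequality (a := 0) (b := R) (c := 0) (d := L) (w := φ)
    (by fun_prop) (fun y hy => by simp only [φ, hleft y hy, mul_zero])
    (fun x hx => by simp only [φ, hbottom x hx, mul_zero])
  simp only [φ_pow_four, φ_sq, pdy_φ_sq] at ladyzhenskaya
  calc _ ≤ _ := ladyzhenskaya
    _ ≤ 2 * weightedEnergy κ (truncatedStrip R L) w *
        (2 * weightedEnergy κ (truncatedStrip R L) (pdx w) +
          κ ^ 2 / 2 * weightedEnergy κ (truncatedStrip R L) w +
          weightedEnergy κ (truncatedStrip R L) (pdy w)) :=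
        mul_le_mul_of_nonneg_left (add_le_add_left (setIntegral_pdx_exp_half_mul_sq_le hw) _)
          (mul_nonneg zero_le_two weightedEnergy_nonneg)
    _ = _ := by ring

/-- The factor `w` of `e^{κx} w³` is controlled by the small mass, and `e^{κx} w²` by
Ladyzhenskaya's inequality. -/
lemma setIntegral_exp_mul_cube_le (hw : ContDiff ℝ 1 w) (hleft : ∀ y ∈ Ioo 0 L, w (0, y) = 0)
    (hbottom : ∀ x ∈ Ioo 0 R, w (x, 0) = 0) (hd : 0 ≤ d) (hm : 0 ≤ m)
    (hmass : ∫ p in truncatedStrip R L, w p ^ 2 ≤ 9 * d / 2 * m) :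
    2 / 3 * ∫ p in truncatedStrip R L, exp (κ * p.1) * w p ^ 3 ≤
      d * weightedEnergy κ (truncatedStrip R L) w +
        m * (κ ^ 2 / 2 * weightedEnergy κ (truncatedStrip R L) w +
          2 * weightedEnergy κ (truncatedStrip R L) (pdx w) +
          weightedEnergy κ (truncatedStrip R L) (pdy w)) := by
  have ladyzhenskaya := weighted_ladyzhenskaya_inequality (κ := κ) hw hleft hbottom
  set E := weightedEnergy κ (truncatedStrip R L) w
  set A := weightedEnergy κ (truncatedStrip R L) (pdx w)
  set B := weightedEnergy κ (truncatedStrip R L) (pdy w)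
  have hE : 0 ≤ E := weightedEnergy_nonneg
  have hA : 0 ≤ A := weightedEnergy_nonneg
  have hB : 0 ≤ B := weightedEnergy_nonneg
  have hwc := hw.continuous
  have cauchy_schwarz : (∫ p in truncatedStrip R L, exp (κ * p.1) * w p ^ 3) ^ 2 ≤
      (∫ p in truncatedStrip R L, w p ^ 2) *
        ∫ p in truncatedStrip R L, (exp (κ * p.1) * w p ^ 2) ^ 2 := by
    refine le_of_eq_of_le ?_ (sq_integral_mul_le (memLp_two_rectangle hwc)
      (memLp_two_rectangle (f := fun p => exp (κ * p.1) * w p ^ 2) (by fun_prop)))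
    congr! 2
    ext p
    ring
  refine le_of_abs_le (abs_le_of_sq_le_sq ?_ (by positivity))
  calc (2 / 3 * ∫ p in truncatedStrip R L, exp (κ * p.1) * w p ^ 3) ^ 2
      ≤ 4 / 9 * (9 * d / 2 * m * (E * (κ ^ 2 * E + 4 * A + 2 * B))) := by
        rw [mul_pow]
        norm_num only
        gcongr
        exact cauchy_schwarz.trans (by gcongr)
    _ = 4 * (d * E) * (m * (κ ^ 2 / 2 * E + 2 * A + B)) := by ring
    _ ≤ (d * E + m * (κ ^ 2 / 2 * E + 2 * A + B)) ^ 2 := four_mul_le_sq_add _ _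

lemma setIntegral_energyProduction (hw : ContDiff ℝ 2 w) :
    ∫ p in truncatedStrip R L, energyProduction k w p =
      k * ((1 + k ^ 2 - k ^ 4) * weightedEnergy k (truncatedStrip R L) w +
        2 / 3 * (∫ p in truncatedStrip R L, exp (k * p.1) * w p ^ 3) -
        (3 - 5 * k ^ 2) * weightedEnergy k (truncatedStrip R L) (pdx w) -
        weightedEnergy k (truncatedStrip R L) (pdy w) -
        5 * weightedEnergy k (truncatedStrip R L) (pd 2 0 w)) := by
  have hwc := hw.continuous
  have hy : Continuous (pdy w) := (contDiff_pdy (n := 0) (hw.of_le (by norm_num))).continuous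
  have hx : Continuous (pdx w) := (contDiff_pdx (n := 0) (hw.of_le (by norm_num))).continuous
  have hxx : Continuous (pd 2 0 w) := (contDiff_pd (m := 0) (n := 2) 2 0 hw le_rfl).continuous
  simp only [weightedEnergy, ← integral_const_mul]
  rw [← integral_add, ← integral_sub, ← integral_sub, ← integral_sub, ← integral_const_mul]
  · refine integral_congr_ae (ae_of_all _ fun p => ?_)
    have hx₁ : pd 1 0 w p = pdx w p := rfl
    simp only [energyProduction, hx₁]
    ring
  all_goals exact integrableOn_rectangle (by fun_prop)

/-- Coercivity: Steklov's inequality in `y` lets `-k ∫ e^{kx} w_y²` absorb the transport term and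
the part of the cubic term that the `w_x` dissipation does not absorb. -/
lemma setIntegral_energyProduction_le (hw : ContDiff ℝ 2 w) (hL : 0 < L) (hk : 0 ≤ k)
    (hleft : ∀ y ∈ Ioo 0 L, w (0, y) = 0)
    (hlateral : ∀ x ∈ Ioo 0 R, w (x, 0) = 0 ∧ w (x, L) = 0)
    (hd : 1 + 4 * d = (π / L) ^ 2) (hkd : k ^ 2 ≤ 4 * d / 9)
    (hm : 0 ≤ m) (hm₁ : m ≤ 1 / 8) (hm₂ : m ≤ (3 - 5 * k ^ 2) / 4) (hm₃ : m ≤ d / 4)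
    (hmass : ∫ p in truncatedStrip R L, w p ^ 2 ≤ 9 * d / 2 * m) :
    ∫ p in truncatedStrip R L, energyProduction k w p ≤
      -(k * (d + k ^ 4)) * weightedEnergy k (truncatedStrip R L) w := by
  have hw₁ : ContDiff ℝ 1 w := hw.of_le (by norm_num)
  have steklov := mul_setIntegral_mul_sq_le_of_lateral_eq_zero (g := fun x => exp (k * x))
    (by fun_prop) (fun _ => by positivity) hL hw₁ hlateral
  have cubic := setIntegral_exp_mul_cube_le (κ := k) hw₁ hleft (fun x hx => (hlateral x hx).1)
    (by linarith) hm hmass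
  rw [setIntegral_energyProduction hw]
  rw [sub_zero, ← hd] at steklov
  change (1 + 4 * d) * weightedEnergy k (truncatedStrip R L) w ≤
    weightedEnergy k (truncatedStrip R L) (pdy w) at steklov
  have hF := weightedEnergy_nonneg (κ := k) (S := truncatedStrip R L) (w := pd 2 0 w)
  have hE := weightedEnergy_nonneg (κ := k) (S := truncatedStrip R L) (w := w)
  have hA := weightedEnergy_nonneg (κ := k) (S := truncatedStrip R L) (w := pdx w)
  have hA_absorbed := mul_nonneg (by linarith : 0 ≤ 3 - 5 * k ^ 2 - 2 * m) hA
  have hB_absorbed := mul_le_mul_of_nonneg_left steklov (by linarith : 0 ≤ 1 - m)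
  have coefficient_nonneg : 0 ≤ 2 * d - (k ^ 2 + m * (k ^ 2 / 2) + m + 4 * m * d) := by
    nlinarith [mul_le_mul_of_nonneg_left hkd hm]
  have hE_absorbed := mul_nonneg coefficient_nonneg hE
  rw [neg_mul, mul_assoc, ← mul_neg]
  gcongr
  linarith

end Coercivity

section Decay

variable {k L T : ℝ} {u : ℝ → ℝ × ℝ → ℝ}

lemma hasWeightedDecay_iff {v : ℝ → ℝ × ℝ → ℝ} :
    HasWeightedDecay k L T v ↔ ∀ ε > 0, ∃ M, ∀ x ≥ M, ∀ t ∈ Icc 0 T, ∀ y ∈ Ioo 0 L,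
      |exp (k * x / 2) * v t (x, y)| < ε := by
  simp only [HasWeightedDecay, Metric.tendstoUniformlyOn_iff, dist_zero_left, norm_eq_abs,
    eventually_atTop, Prod.forall, mem_prod, and_imp]
  exact forall₂_congr fun ε _ => exists_congr fun M => forall₂_congr fun x _ =>
    ⟨fun h t ht y hy => h t y ht hy, fun h t y ht hy => h t ht y hy⟩

lemma weightedEnergy_zero (S : Set (ℝ × ℝ)) (w : ℝ × ℝ → ℝ) :
    weightedEnergy 0 S w = ∫ p in S, w p ^ 2 := by
  simp only [weightedEnergy, zero_mul, exp_zero, one_mul]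

/-- The mass balance: for the weight `κ = 0` the energy production vanishes. -/
lemma IsKawaharaSolution.integrableOn_sq_and_setIntegral_sq_le (hu : IsKawaharaSolution L T u)
    (hL : 0 ≤ L) (hk : 0 ≤ k) (hx : ∀ j ≤ 4, HasWeightedDecay k L T fun t => pd j 0 (u t))
    (hy : HasWeightedDecay k L T fun t => pdy (u t))
    (hu₀ : IntegrableOn (fun p => u 0 p ^ 2) (halfStrip L)) :
    ∀ t ∈ Icc 0 T, IntegrableOn (fun p => u t p ^ 2) (halfStrip L) ∧
      ∫ p in halfStrip L, u t p ^ 2 ≤ ∫ p in halfStrip L, u 0 p ^ 2 := by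
  have mass_balance := hu.integrableOn_and_weightedEnergy_le (κ := 0) (K := 0) hL
    (fun _ => eventually_kawaharaFlux_le hk hk hx hy) (by simp [energyProduction])
    (by simpa only [zero_mul, exp_zero, one_mul] using hu₀)
  simpa only [weightedEnergy_zero, zero_mul, exp_zero, one_mul, mul_one] using mass_balance

theorem kawahara_weighted_L2_decay_general {δsq a : ℝ} (hL : 0 < L) (hk : 0 ≤ k)
    (hδsq : δsq = (π ^ 2 - L ^ 2) / (4 * L ^ 2)) (hksmall : k ^ 2 ≤ min (3 / 5) (4 * δsq / 9))
    (ha : a = (3 - 5 * k ^ 2) / 2) (hu : IsKawaharaSolution L T u)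
    (hx : ∀ j ≤ 4, HasWeightedDecay k L T fun t => pd j 0 (u t))
    (hy : HasWeightedDecay k L T fun t => pdy (u t))
    (hu₀ : IntegrableOn (fun p => exp (k * p.1) * u 0 p ^ 2) (halfStrip L))
    (hsmall : ∫ p in halfStrip L, u 0 p ^ 2 ≤
      9 * δsq / 2 * min (1 / 8) (min (a / 2) (δsq / 4))) :
    ∀ t ∈ Icc 0 T, IntegrableOn (fun p => exp (k * p.1) * u t p ^ 2) (halfStrip L) ∧
      ∫ p in halfStrip L, u t p ^ 2 ≤ ∫ p in halfStrip L, exp (k * p.1) * u t p ^ 2 ∧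
      ∫ p in halfStrip L, exp (k * p.1) * u t p ^ 2 ≤
        exp (-(k * (δsq + k ^ 4)) * t) * ∫ p in halfStrip L, exp (k * p.1) * u 0 p ^ 2 := by
  obtain ⟨hk₁, hk₂⟩ := le_min_iff.1 hksmall
  have steklov_constant : 1 + 4 * δsq = (π / L) ^ 2 := by rw [hδsq]; field_simp; ring
  set m := min (1 / 8) (min (a / 2) (δsq / 4))
  have hm : 0 ≤ m := le_min (by norm_num) (le_min (by linarith) (by nlinarith))
  have hm₁ : m ≤ 1 / 8 := min_le_left _ _
  have hm₂ : m ≤ (3 - 5 * k ^ 2) / 4 :=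
    ((min_le_right _ _).trans (min_le_left _ _)).trans (by linarith)
  have hm₃ : m ≤ δsq / 4 := (min_le_right _ _).trans (min_le_right _ _)
  have hu₀_sq : IntegrableOn (fun p => u 0 p ^ 2) (halfStrip L) := by
    simpa only [zero_mul, exp_zero, one_mul] using
      integrableOn_exp_mul_sq_of_le hk (hu.contDiff_slice 0).continuous hu₀
  have mass := hu.integrableOn_sq_and_setIntegral_sq_le hL.le hk hx hy hu₀_sq
  have mass_small (R t : ℝ) (ht : t ∈ Icc 0 T) :
      ∫ p in truncatedStrip R L, u t p ^ 2 ≤ 9 * δsq / 2 * m :=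
    (setIntegral_mono_set (mass t ht).1 (ae_of_all _ fun p => sq_nonneg (u t p))
      truncatedStrip_subset_halfStrip.eventuallyLE).trans ((mass t ht).2.trans hsmall)
  intro t ht
  obtain ⟨hut, decay⟩ := hu.integrableOn_and_weightedEnergy_le hL.le
    (fun _ => eventually_kawaharaFlux_le le_rfl hk hx hy)
    (fun R _ t ht => setIntegral_energyProduction_le ((hu.contDiff_slice t).of_le (by norm_num)) hL
      hk (fun y hy => (hu.left_boundary t ht y hy).1)
      (fun x hx => hu.lateral_boundary t ht x hx.1) steklov_constant hk₂ hm hm₁ hm₂ hm₃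
      (mass_small R t ht)) hu₀ t ht
  refine ⟨hut, setIntegral_mono_on (mass t ht).1 hut measurableSet_halfStrip fun p hp => ?_,
    decay.trans_eq (mul_comm _ _)⟩
  simpa only [zero_mul, exp_zero, one_mul] using exp_mul_sq_le_of_mem_halfStrip hk (u t) hp

end Decay

/-- Lemma 6.2: exponential decay of the `e^{kx}`-weighted `L²` norm of small
regular solutions of the 2D Kawahara equation with transport term (`α = 1`) on
the half-strip `D = (0,∞) × (0,L)`, `L < π`. -/
theorem kawahara_weighted_L2_decay (L k T : ℝ)
    (hL : L ∈ Set.Ioo (0:ℝ) Real.pi) (hT : 0 < T) (hk : 0 < k)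
    (δsq a χ : ℝ)
    (hδsq : δsq = (Real.pi ^ 2 - L ^ 2) / (4 * L ^ 2))
    (hksmall : k ^ 2 < min (3 / 5) (4 * δsq / 9))
    (ha : a = (3 - 5 * k ^ 2) / 2)
    (hχ : χ = k * (δsq + k ^ 4))
    (D : Set (ℝ × ℝ)) (hD : D = Set.Ioi (0:ℝ) ×ˢ Set.Ioo 0 L)
    (u : ℝ → ℝ × ℝ → ℝ)
    (hu : ContDiff ℝ (⊤ : ℕ∞) (Function.uncurry u))
    (heq : ∀ t ∈ Set.Icc (0:ℝ) T, ∀ p ∈ D,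
      deriv (fun s => u s p) t + pdx (u t) p + u t p * pdx (u t) p +
        pd 3 0 (u t) p + pd 1 2 (u t) p - pd 5 0 (u t) p = 0)
    (hbc1 : ∀ t ∈ Set.Icc (0:ℝ) T, ∀ y ∈ Set.Ioo (0:ℝ) L,
      u t (0, y) = 0 ∧ pdx (u t) (0, y) = 0)
    (hbc2 : ∀ t ∈ Set.Icc (0:ℝ) T, ∀ x > (0:ℝ),
      u t (x, 0) = 0 ∧ u t (x, L) = 0)
    (hint : ∀ i j : ℕ, i + j ≤ 5 →
      (∀ t ∈ Set.Icc (0:ℝ) T,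
        IntegrableOn (fun p => (Real.exp (k * p.1 / 2) * pd i j (u t) p) ^ 2) D) ∧
      ∃ C : ℝ, ∀ t ∈ Set.Icc (0:ℝ) T,
        (∫ p in D, (Real.exp (k * p.1 / 2) * pd i j (u t) p) ^ 2) ≤ C)
    (hdec : ∀ i j : ℕ, i + j ≤ 5 →
      ∀ ε > 0, ∃ M : ℝ, ∀ x ≥ M, ∀ y : ℝ, ∀ t ∈ Set.Icc (0:ℝ) T,
        |Real.exp (k * x / 2) * pd i j (u t) (x, y)| ≤ ε)
    (hsmall : (∫ p in D, (u 0 p) ^ 2) ≤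
      (9 * δsq / 2) * min (1 / 8) (min (a / 2) (δsq / 4))) :
    ∀ t ∈ Set.Icc (0:ℝ) T,
      (∫ p in D, (u t p) ^ 2) ≤ (∫ p in D, Real.exp (k * p.1) * (u t p) ^ 2) ∧
      (∫ p in D, Real.exp (k * p.1) * (u t p) ^ 2) ≤
        Real.exp (-χ * t) * ∫ p in D, Real.exp (k * p.1) * (u 0 p) ^ 2 := by
  subst hD ha hχ
  have decay (i j : ℕ) (hij : i + j ≤ 5) : HasWeightedDecay k L T fun t => pd i j (u t) :=
    hasWeightedDecay_iff.2 fun ε hε => (hdec i j hij (ε / 2) (half_pos hε)).imp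
      fun M hM x hx t ht y _ => (hM x hx y t ht).trans_lt (half_lt_self hε)
  have hu₀ : IntegrableOn (fun p => exp (k * p.1) * u 0 p ^ 2) (halfStrip L) := by
    have initial := (hint 0 0 (by simp)).1 0 (left_mem_Icc.2 hT.le)
    simp only [mul_pow, exp_half_sq] at initial
    exact initial
  exact fun t ht => (kawahara_weighted_L2_decay_general hL.1 hk.le hδsq hksmall.le rfl
    ⟨contDiff_infty.1 hu 5, heq, hbc1, hbc2⟩ (fun j hj => decay j 0 (by lia))
    (decay 0 1 (by simp)) hu₀ hsmall t ht).2
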